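/- If (X, k) is a solution of the Skorokhod problem with mean minimality condition and two constraints associated with (h, Y, l, u), then for every t ≥ 0, k_t = −max( 0 ∧ inf_{0≤u≤t}(E[Y_u] − l̄_u), sup_{0≤s≤t}[ (E[Y_s] − ū_s) ∧ inf_{s≤u≤t}(E[Y_u] − l̄_u) ] ), where ∧ denotes minimum. -/

import Mathlib

open MeasureTheory Filter Set Function Topology

noncomputable section

/-- A function with values in a topological space is càdlàg on `[0,∞)`:
right-continuous at every `t ≥ 0` and admitting a left limit at every `t > 0`. -/
def CadlagOn {E : Type*} [TopologicalSpace E] (f : ℝ → E) : Prop :=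
  (∀ t : ℝ, 0 ≤ t → ContinuousWithinAt f (Set.Ici t) t) ∧
  ∀ t : ℝ, 0 < t → ∃ L : E, Filter.Tendsto f (nhdsWithin t (Set.Iio t)) (nhds L)

/-- Condition (H) on `h : [0,∞) × ℝ → ℝ` with constants `Mh, Lh, ch, Ch`. -/
structure CondH (h : ℝ → ℝ → ℝ) (Mh Lh ch Ch : ℝ) : Prop where
  meas : Measurable (Function.uncurry h)
  Mh_pos : 0 < Mh
  Lh_pos : 0 < Lh
  ch_pos : 0 < ch
  Ch_pos : 0 < Ch
  growth : ∀ t x : ℝ, 0 ≤ t → |h t x| ≤ Mh * (1 + |x|)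
  strict_mono : ∀ t : ℝ, 0 ≤ t → StrictMono (h t)
  lip_time : ∀ s t x : ℝ, 0 ≤ s → 0 ≤ t → |h t x - h s x| ≤ Lh * |t - s|
  lip_lower : ∀ t x y : ℝ, 0 ≤ t → ch * |x - y| ≤ |h t x - h t y|
  lip_upper : ∀ t x y : ℝ, 0 ≤ t → |h t x - h t y| ≤ Ch * |x - y|

/-- A process with càdlàg paths, integrable values, and values uniformly integrable
on every compact time interval. -/
structure NiceProcess {Ω : Type*} [MeasurableSpace Ω] (μ : Measure Ω) (Y : ℝ → Ω → ℝ) : Prop where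
  cadlag : ∀ ω, CadlagOn fun t => Y t ω
  integrable : ∀ t : ℝ, 0 ≤ t → Integrable (Y t) μ
  unifInt : ∀ q : ℝ, 0 ≤ q → UniformIntegrable (fun t : Set.Icc (0:ℝ) q => Y t.1) 1 μ

/-- Solution of the Skorokhod problem with mean minimality condition and two constraints
associated with `(h, Y, l, u)`. -/
def MeanSP {Ω : Type*} [MeasurableSpace Ω] (μ : Measure Ω) (h : ℝ → ℝ → ℝ)
    (Y : ℝ → Ω → ℝ) (l u : ℝ → ℝ) (X : ℝ → Ω → ℝ) (k : ℝ → ℝ) : Prop :=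
  (∀ ω, CadlagOn fun t => X t ω) ∧ CadlagOn k ∧ k 0 = 0 ∧
  (∀ t : ℝ, 0 ≤ t → ∀ ω, X t ω = Y t ω + k t) ∧
  (∀ t : ℝ, 0 ≤ t → (∫ ω, h t (X t ω) ∂μ) ∈ Set.Icc (l t) (u t)) ∧
  (∀ t q : ℝ, 0 ≤ t → t ≤ q →
    ((∀ s : ℝ, t < s → s ≤ q → (∫ ω, h s (X s ω) ∂μ) < u s) → 0 ≤ k q - k t) ∧
    ((∀ s : ℝ, t < s → s ≤ q → l s < ∫ ω, h s (X s ω) ∂μ) → k q - k t ≤ 0)) ∧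
  ∀ t : ℝ, 0 < t →
    ((∫ ω, h t (X t ω) ∂μ) < u t → 0 ≤ k t - Function.leftLim k t) ∧
    (l t < ∫ ω, h t (X t ω) ∂μ → k t - Function.leftLim k t ≤ 0)

/-- Solution of the deterministic Skorokhod problem with two time-dependent barriers. -/
def DetSP (y lb ub x k : ℝ → ℝ) : Prop :=
  CadlagOn x ∧ CadlagOn k ∧ k 0 = 0 ∧
  (∀ t : ℝ, 0 ≤ t → x t = y t + k t ∧ x t ∈ Set.Icc (lb t) (ub t)) ∧
  (∀ t q : ℝ, 0 ≤ t → t ≤ q →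
    ((∀ s : ℝ, t < s → s ≤ q → x s < ub s) → 0 ≤ k q - k t) ∧
    ((∀ s : ℝ, t < s → s ≤ q → lb s < x s) → k q - k t ≤ 0)) ∧
  ∀ t : ℝ, 0 < t →
    (x t < ub t → 0 ≤ k t - Function.leftLim k t) ∧
    (lb t < x t → k t - Function.leftLim k t ≤ 0)

/-- Solution of the Skorokhod problem with mean minimality condition and a single
lower barrier `l`.  The minimality condition `∫ (E[h(s,X_s)] - l_s) dk_s = 0` is expressed
through any measure `ν` that agrees with the Lebesgue–Stieltjes measure of `k` on `[0,∞)`. -/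
def MeanSPLower {Ω : Type*} [MeasurableSpace Ω] (μ : Measure Ω) (h : ℝ → ℝ → ℝ)
    (Y : ℝ → Ω → ℝ) (l : ℝ → ℝ) (X : ℝ → Ω → ℝ) (k : ℝ → ℝ) : Prop :=
  (∀ ω, CadlagOn fun t => X t ω) ∧ CadlagOn k ∧ k 0 = 0 ∧
  (∀ t : ℝ, 0 ≤ t → ∀ ω, X t ω = Y t ω + k t) ∧
  (∀ t : ℝ, 0 ≤ t → l t ≤ ∫ ω, h t (X t ω) ∂μ) ∧
  MonotoneOn k (Set.Ici 0) ∧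
  ∀ ν : Measure ℝ,
    (∀ a b : ℝ, 0 ≤ a → a ≤ b → ν (Set.Ioc a b) = ENNReal.ofReal (k b - k a)) →
    ν {0} = 0 →
    ∀ t : ℝ, 0 ≤ t → (∫ s in Set.Icc 0 t, ((∫ ω, h s (X s ω) ∂μ) - l s) ∂ν) = 0

/-- Solution of the Skorokhod problem with mean minimality condition and a single
upper barrier `u`.  The minimality condition `∫ (u_s - E[h(s,X_s)]) d(-k)_s = 0` is expressed
through any measure `ν` that agrees with the Lebesgue–Stieltjes measure of `-k` on `[0,∞)`. -/
def MeanSPUpper {Ω : Type*} [MeasurableSpace Ω] (μ : Measure Ω) (h : ℝ → ℝ → ℝ)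
    (Y : ℝ → Ω → ℝ) (u : ℝ → ℝ) (X : ℝ → Ω → ℝ) (k : ℝ → ℝ) : Prop :=
  (∀ ω, CadlagOn fun t => X t ω) ∧ CadlagOn k ∧ k 0 = 0 ∧
  (∀ t : ℝ, 0 ≤ t → ∀ ω, X t ω = Y t ω + k t) ∧
  (∀ t : ℝ, 0 ≤ t → (∫ ω, h t (X t ω) ∂μ) ≤ u t) ∧
  AntitoneOn k (Set.Ici 0) ∧
  ∀ ν : Measure ℝ,
    (∀ a b : ℝ, 0 ≤ a → a ≤ b → ν (Set.Ioc a b) = ENNReal.ofReal (k a - k b)) →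
    ν {0} = 0 →
    ∀ t : ℝ, 0 ≤ t → (∫ s in Set.Icc 0 t, (u s - ∫ ω, h s (X s ω) ∂μ) ∂ν) = 0

/-- `OscN x η q` is the number of `η`-oscillations of `x` on `[0,q]`: the largest `m`
for which there are `0 ≤ t₁ ≤ t₂ ≤ ⋯ ≤ t_{2m} ≤ q` with `|x(t_{2i}) - x(t_{2i-1})| > η`. -/
def OscN (x : ℝ → ℝ) (η q : ℝ) : ℕ :=
  sSup {m : ℕ | ∃ a b : Fin m → ℝ,
    (∀ i, 0 ≤ a i ∧ a i ≤ b i ∧ b i ≤ q) ∧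
    (∀ i j, i < j → b i ≤ a j) ∧
    ∀ i, η < |x (b i) - x (a i)|}

/-- The left limit at `t` of a càdlàg function on `[0,∞)`, with the convention
`x(0-) = x(0)`. -/
def leftLimAt {E : Type*} [TopologicalSpace E] (x : ℝ → E) (t : ℝ) : E :=
  if t = 0 then x 0 else Function.leftLim x t

/-- Convergence `xₙ → x` in the Skorokhod `J₁` topology on `D([0,∞), E)`, expressed via
the sequence characterization used in the paper. -/
def DConvOn {E : Type*} [TopologicalSpace E] (xs : ℕ → ℝ → E) (x : ℝ → E) : Prop :=
  ∀ t : ℝ, 0 ≤ t → ∃ tn : ℕ → ℝ,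
    (∀ n, 0 ≤ tn n) ∧ Filter.Tendsto tn Filter.atTop (nhds t) ∧
    ∀ t' t'' : ℕ → ℝ, (∀ n, 0 ≤ t' n) → (∀ n, 0 ≤ t'' n) →
      Filter.Tendsto t' Filter.atTop (nhds t) → Filter.Tendsto t'' Filter.atTop (nhds t) →
      (∀ n, t' n < tn n ∧ tn n ≤ t'' n) →
      Filter.Tendsto (fun n => xs n (t' n)) Filter.atTop (nhds (leftLimAt x t)) ∧
      Filter.Tendsto (fun n => xs n (t'' n)) Filter.atTop (nhds (x t))

/-!
A solution of the mean Skorokhod problem is a deterministic one in disguise. Since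
`z ↦ E[h(t, Y_t + z)]` is strictly increasing, the constraint on `E[h(t, X_t)]` says that `k` stays
between the two barriers `l̄_t - E[Y_t]` and `ū_t - E[Y_t]`, starts at `0`, and moves upwards only
at the lower barrier and downwards only at the upper one.

For such a `k`, look at the last time before `t` at which `k ≤ c`. If `k t > c`, the subsequent
upward motion forces `k` to be on the lower barrier at a time after which `k` stays above `c`.
Hence `k` cannot rise above a level which the lower barrier does not exceed, which bounds `-k`
from below by the explicit formula. By the symmetric statement, `k` falls below a level only by
following the upper barrier, which gives the other inequality.
-/

theorem le_of_tendsto_nhdsLT_of_isLUB {α β : Type*} [LinearOrder α] [TopologicalSpace α]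
    [OrderTopology α] [Preorder β] [TopologicalSpace β] [ClosedIicTopology β] {f : α → β}
    {S : Set α} {a : α} {L c : β} (hf : Tendsto f (𝓝[<] a) (𝓝 L)) (hS : IsLUB S a)
    (hne : S.Nonempty) (ha : a ∉ S) (hle : ∀ r ∈ S, f r ≤ c) : L ≤ c := by
  have hfreq : ∃ᶠ r in 𝓝[<] a, r ∈ S := by
    have := hS.frequently_mem hne
    rw [← Iio_insert, nhdsWithin_insert, frequently_sup, frequently_pure] at this
    exact this.resolve_left ha
  exact le_of_tendsto_of_frequently hf (hfreq.mono hle)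

theorem strictMono_integral {Ω β : Type*} [MeasurableSpace Ω] {μ : Measure Ω} [NeZero μ]
    [Preorder β] {F : β → Ω → ℝ} (hmono : ∀ ω, StrictMono fun z => F z ω)
    (hint : ∀ z, Integrable (F z) μ) : StrictMono fun z => ∫ ω, F z ω ∂μ := by
  intro z z' hz
  have hpos : ∀ ω, 0 < F z' ω - F z ω := fun ω => sub_pos.mpr (hmono ω hz)
  have hsupp : support (fun ω => F z' ω - F z ω) = univ :=
    eq_univ_of_forall fun ω => (hpos ω).ne'
  have hdiff : 0 < ∫ ω, (F z' ω - F z ω) ∂μ := by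
    rw [integral_pos_iff_support_of_nonneg (fun ω => (hpos ω).le) ((hint z').sub (hint z)), hsupp]
    exact Measure.measure_univ_pos.mpr (NeZero.ne μ)
  rwa [integral_sub (hint z') (hint z), sub_pos] at hdiff

namespace CadlagOn

theorem tendsto_leftLim {E : Type*} [TopologicalSpace E] {f : ℝ → E} (hf : CadlagOn f) {t : ℝ}
    (ht : 0 < t) : Tendsto f (𝓝[<] t) (𝓝 (leftLim f t)) :=
  tendsto_leftLim_of_tendsto (hf.2 t ht)

theorem neg {E : Type*} [TopologicalSpace E] [Neg E] [ContinuousNeg E] {f : ℝ → E}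
    (hf : CadlagOn f) : CadlagOn (-f) :=
  ⟨fun t ht => (hf.1 t ht).neg, fun _ ht => ⟨_, (hf.tendsto_leftLim ht).neg⟩⟩

theorem leftLim_neg {E : Type*} [TopologicalSpace E] [T2Space E] [Neg E] [ContinuousNeg E]
    {f : ℝ → E} (hf : CadlagOn f) {t : ℝ} (ht : 0 < t) : leftLim (-f) t = -leftLim f t :=
  leftLim_eq_of_tendsto (hf.tendsto_leftLim ht).neg

theorem isBounded_image_Icc {E : Type*} [PseudoMetricSpace E] {f : ℝ → E} (hf : CadlagOn f)
    (t : ℝ) : Bornology.IsBounded (f '' Icc 0 t) := by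
  refine isCompact_Icc.induction_on (p := fun A => Bornology.IsBounded (f '' A)) (by simp)
    (fun _ _ hAB hB => hB.subset (image_mono hAB))
    (fun A B hA hB => by simpa only [image_union] using hA.union hB) fun r hr => ?_
  obtain ⟨V, hV, hfV⟩ := Metric.exists_isBounded_image_of_tendsto (hf.1 r hr.1)
  rcases hr.1.eq_or_lt with rfl | hpos
  · exact ⟨V, nhdsWithin_mono _ Icc_subset_Ici_self hV, hfV⟩
  · obtain ⟨W, hW, hfW⟩ := Metric.exists_isBounded_image_of_tendsto (hf.tendsto_leftLim hpos)
    refine ⟨W ∪ V, mem_nhdsWithin_of_mem_nhds ?_, by simpa only [image_union] using hfW.union hfV⟩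
    rw [← nhdsLT_sup_nhdsGE]
    exact union_mem_sup hW hV

end CadlagOn

/-- The explicit expression for `-k`, where `k` solves a two-sided Skorokhod problem which keeps
`-k` between `b` (below) and `a` (above). -/
def reflection (a b : ℝ → ℝ) (t : ℝ) : ℝ :=
  max (min 0 (sInf (a '' Icc 0 t)))
    (sSup ((fun s => min (b s) (sInf (a '' Icc s t))) '' Icc 0 t))

namespace DetSP

variable {y lb ub x k : ℝ → ℝ} {s t c : ℝ}

theorem neg (hsol : DetSP y lb ub x k) : DetSP (-y) (-ub) (-lb) (-x) (-k) := by
  obtain ⟨hx, hk, hk0, hmem, hmin, hjump⟩ := hsol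
  refine ⟨hx.neg, hk.neg, by simp [hk0], fun t ht => ⟨?_, ?_⟩, fun t q ht htq => ⟨?_, ?_⟩,
    fun t ht => ⟨?_, ?_⟩⟩
  · simp only [Pi.neg_apply, (hmem t ht).1, neg_add]
  · exact ⟨neg_le_neg (hmem t ht).2.2, neg_le_neg (hmem t ht).2.1⟩
  · intro hlt
    have := (hmin t q ht htq).2 fun s hts hsq => neg_lt_neg_iff.mp (hlt s hts hsq)
    simp only [Pi.neg_apply]
    linarith
  · intro hlt
    have := (hmin t q ht htq).1 fun s hts hsq => neg_lt_neg_iff.mp (hlt s hts hsq)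
    simp only [Pi.neg_apply]
    linarith
  · intro hlt
    have := (hjump t ht).2 (neg_lt_neg_iff.mp hlt)
    rw [hk.leftLim_neg ht, Pi.neg_apply]
    linarith
  · intro hlt
    have := (hjump t ht).1 (neg_lt_neg_iff.mp hlt)
    rw [hk.leftLim_neg ht, Pi.neg_apply]
    linarith

theorem apply_zero (hsol : DetSP y lb ub x k) : k 0 = 0 :=
  hsol.2.2.1

theorem eq_add (hsol : DetSP y lb ub x k) (ht : 0 ≤ t) : x t = y t + k t :=
  (hsol.2.2.2.1 t ht).1

theorem mem_Icc (hsol : DetSP y lb ub x k) (ht : 0 ≤ t) : x t ∈ Icc (lb t) (ub t) :=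
  (hsol.2.2.2.1 t ht).2

theorem sub_upper_le_neg (hsol : DetSP y lb ub x k) (ht : 0 ≤ t) : (y - ub) t ≤ -k t := by
  rw [Pi.sub_apply]
  linarith [hsol.eq_add ht, (hsol.mem_Icc ht).2]

theorem neg_le_sub_lower (hsol : DetSP y lb ub x k) (ht : 0 ≤ t) : -k t ≤ (y - lb) t := by
  rw [Pi.sub_apply]
  linarith [hsol.eq_add ht, (hsol.mem_Icc ht).1]

theorem sub_upper_eq_neg (hsol : DetSP y lb ub x k) (ht : 0 ≤ t) (hx : x t = ub t) :
    (y - ub) t = -k t := by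
  rw [Pi.sub_apply]
  linarith [hsol.eq_add ht]

theorem sub_lower_eq_neg (hsol : DetSP y lb ub x k) (ht : 0 ≤ t) (hx : x t = lb t) :
    (y - lb) t = -k t := by
  rw [Pi.sub_apply]
  linarith [hsol.eq_add ht]

theorem exists_eq_lower_of_upcrossing (hsol : DetSP y lb ub x k) (hs : 0 ≤ s) (hst : s ≤ t)
    (hks : k s ≤ c) (hkt : c < k t) :
    ∃ σ ∈ Ioc s t, x σ = lb σ ∧ ∀ r ∈ Icc σ t, c < k r := by
  have ⟨_, hk, _, _, hmin, hjump⟩ := hsol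
  set S : Set ℝ := {r ∈ Icc s t | k r ≤ c}
  have hsS : s ∈ S := ⟨⟨le_rfl, hst⟩, hks⟩
  have hSt : t ∈ upperBounds S := fun r hr => hr.1.2
  obtain ⟨σ, hσ⟩ : ∃ σ, IsLUB S σ := ⟨sSup S, isLUB_csSup ⟨s, hsS⟩ ⟨t, hSt⟩⟩
  have hsσ : s ≤ σ := hσ.1 hsS
  have hσt : σ ≤ t := hσ.2 hSt
  have habove : ∀ r ∈ Ioc σ t, c < k r := fun r hr => by
    by_contra! hle
    exact hr.1.not_ge (hσ.1 ⟨⟨hsσ.trans hr.1.le, hr.2⟩, hle⟩)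
  by_cases hcontact : ∃ r ∈ Ioc σ t, x r ≤ lb r
  · obtain ⟨r, hr, hxr⟩ := hcontact
    have hsr : s < r := hsσ.trans_lt hr.1
    exact ⟨r, ⟨hsr, hr.2⟩, hxr.antisymm (hsol.mem_Icc (hs.trans hsr.le)).1,
      fun q hq => habove q ⟨hr.1.trans_le hq.1, hq.2⟩⟩
  -- Without contact after `σ`, `k` only decreases there, so the level is crossed by a jump at `σ`.
  push Not at hcontact
  have hcσ : c < k σ := by
    have := (hmin σ t (hs.trans hsσ) hσt).2 fun r hσr hrt => hcontact r ⟨hσr, hrt⟩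
    linarith
  have hσS : σ ∉ S := fun hmemS => hcσ.not_ge hmemS.2
  have hlt : s < σ := hsσ.lt_of_ne fun heq => hσS (heq ▸ hsS)
  have hσ0 : 0 < σ := hs.trans_lt hlt
  have hleft : leftLim k σ ≤ c :=
    le_of_tendsto_nhdsLT_of_isLUB (hk.tendsto_leftLim hσ0) hσ ⟨s, hsS⟩ hσS fun r hr => hr.2
  have hxσ : x σ ≤ lb σ := by
    by_contra! hlow
    linarith [(hjump σ hσ0).2 hlow]
  refine ⟨σ, ⟨hlt, hσt⟩, hxσ.antisymm (hsol.mem_Icc hσ0.le).1, fun r hr => ?_⟩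
  rcases hr.1.eq_or_lt with rfl | hσr
  exacts [hcσ, habove r ⟨hσr, hr.2⟩]

theorem exists_eq_upper_of_downcrossing (hsol : DetSP y lb ub x k) (hs : 0 ≤ s) (hst : s ≤ t)
    (hks : c ≤ k s) (hkt : k t < c) :
    ∃ σ ∈ Ioc s t, x σ = ub σ ∧ ∀ r ∈ Icc σ t, k r < c := by
  obtain ⟨σ, hσ, hxσ, hkσ⟩ :=
    hsol.neg.exists_eq_lower_of_upcrossing hs hst (neg_le_neg hks) (neg_lt_neg hkt)
  exact ⟨σ, hσ, neg_injective hxσ, fun r hr => neg_lt_neg_iff.mp (hkσ r hr)⟩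

theorem bddBelow_image_sub_lower (hsol : DetSP y lb ub x k) (hs : 0 ≤ s) :
    BddBelow ((y - lb) '' Icc s t) := by
  obtain ⟨m, hm⟩ := (hsol.2.1.neg.isBounded_image_Icc t).bddBelow
  refine ⟨m, forall_mem_image.mpr fun r hr => ?_⟩
  have hr0 : 0 ≤ r := hs.trans hr.1
  exact (hm (mem_image_of_mem _ ⟨hr0, hr.2⟩)).trans (hsol.neg_le_sub_lower hr0)

theorem min_sInf_le_neg (hsol : DetSP y lb ub x k) (hs : 0 ≤ s) (hst : s ≤ t) (hc : c ≤ -k s) :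
    min c (sInf ((y - lb) '' Icc s t)) ≤ -k t := by
  set m := min c (sInf ((y - lb) '' Icc s t))
  by_contra! hlt
  obtain ⟨σ, hσ, hxσ, hkσ⟩ := hsol.exists_eq_lower_of_upcrossing (c := -m) hs hst
    (by linarith [min_le_left c (sInf ((y - lb) '' Icc s t))]) (by linarith)
  have hcontact : (y - lb) σ = -k σ := hsol.sub_lower_eq_neg (hs.trans hσ.1.le) hxσ
  have hle : m ≤ (y - lb) σ := (min_le_right _ _).trans
    (csInf_le (hsol.bddBelow_image_sub_lower hs) (mem_image_of_mem _ (Ioc_subset_Icc_self hσ)))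
  linarith [hkσ σ ⟨le_rfl, hσ.2⟩]

theorem neg_mem_upperBounds (hsol : DetSP y lb ub x k) :
    -k t ∈ upperBounds ((fun s => min ((y - ub) s) (sInf ((y - lb) '' Icc s t))) '' Icc 0 t) :=
  forall_mem_image.mpr fun _ hs =>
    hsol.min_sInf_le_neg hs.1 hs.2 (hsol.sub_upper_le_neg hs.1)

theorem le_sInf_sub_lower (hsol : DetSP y lb ub x k) (hs : 0 ≤ s) (hst : s ≤ t)
    (hc : ∀ r ∈ Icc s t, c ≤ -k r) : c ≤ sInf ((y - lb) '' Icc s t) :=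
  le_csInf ((nonempty_Icc.mpr hst).image _) <| forall_mem_image.mpr fun r hr =>
    (hc r hr).trans (hsol.neg_le_sub_lower (hs.trans hr.1))

theorem reflection_le_neg (hsol : DetSP y lb ub x k) (ht : 0 ≤ t) :
    reflection (y - lb) (y - ub) t ≤ -k t :=
  max_le (hsol.min_sInf_le_neg le_rfl ht (by simp [hsol.apply_zero])) <|
    csSup_le ((nonempty_Icc.mpr ht).image _) hsol.neg_mem_upperBounds

theorem neg_le_reflection (hsol : DetSP y lb ub x k) (ht : 0 ≤ t) :
    -k t ≤ reflection (y - lb) (y - ub) t := by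
  refine le_of_forall_lt_imp_le_of_dense fun m hm => ?_
  by_cases hdown : ∃ s ∈ Icc 0 t, -m ≤ k s
  · obtain ⟨s, hs, hms⟩ := hdown
    obtain ⟨σ, hσ, hxσ, hkσ⟩ :=
      hsol.exists_eq_upper_of_downcrossing hs.1 hs.2 hms (by linarith)
    have hσ0 : 0 ≤ σ := hs.1.trans hσ.1.le
    have hub : m ≤ (y - ub) σ := by
      linarith [hsol.sub_upper_eq_neg hσ0 hxσ, hkσ σ ⟨le_rfl, hσ.2⟩]
    have hlb : m ≤ sInf ((y - lb) '' Icc σ t) :=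
      hsol.le_sInf_sub_lower hσ0 hσ.2 fun r hr => by linarith [hkσ r hr]
    exact le_max_of_le_right <| (le_min hub hlb).trans <|
      le_csSup ⟨-k t, hsol.neg_mem_upperBounds⟩ (mem_image_of_mem _ ⟨hσ0, hσ.2⟩)
  · push Not at hdown
    have hm0 : m ≤ 0 := by linarith [hdown 0 ⟨le_rfl, ht⟩, hsol.apply_zero]
    have hlb : m ≤ sInf ((y - lb) '' Icc 0 t) :=
      hsol.le_sInf_sub_lower le_rfl ht fun r hr => by linarith [hdown r hr]
    exact le_max_of_le_left (le_min hm0 hlb)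

theorem eq_neg_reflection (hsol : DetSP y lb ub x k) (ht : 0 ≤ t) :
    k t = -reflection (y - lb) (y - ub) t :=
  neg_eq_iff_eq_neg.mp ((hsol.neg_le_reflection ht).antisymm (hsol.reflection_le_neg ht))

end DetSP

section Mean

variable {Ω : Type*} [MeasurableSpace Ω] {μ : Measure Ω} {h : ℝ → ℝ → ℝ}

theorem CondH.integrable_comp [IsFiniteMeasure μ] {Mh Lh ch Ch : ℝ} (hH : CondH h Mh Lh ch Ch)
    {t : ℝ} (ht : 0 ≤ t) {Z : Ω → ℝ} (hZ : Integrable Z μ) :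
    Integrable (fun ω => h t (Z ω)) μ :=
  (((integrable_const 1).add hZ.abs).const_mul Mh).mono'
    (hH.meas.of_uncurry_left.comp_aemeasurable hZ.aemeasurable).aestronglyMeasurable
    (.of_forall fun _ => hH.growth t _ ht)

theorem MeanSP.detSP [NeZero μ] {Y X : ℝ → Ω → ℝ} {l u a b k : ℝ → ℝ}
    (hsol : MeanSP μ h Y l u X k) (hmono : ∀ t, 0 ≤ t → StrictMono (h t))
    (hint : ∀ t, 0 ≤ t → ∀ z, Integrable (fun ω => h t (Y t ω + z)) μ)
    (ha : ∀ t, 0 ≤ t → (∫ ω, h t (Y t ω - a t) ∂μ) = l t)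
    (hb : ∀ t, 0 ≤ t → (∫ ω, h t (Y t ω - b t) ∂μ) = u t) :
    DetSP 0 (-a) (-b) k k := by
  obtain ⟨-, hk, hk0, hX, hmem, hmin, hjump⟩ := hsol
  have hmean (t : ℝ) (ht : 0 ≤ t) : StrictMono fun z => ∫ ω, h t (Y t ω + z) ∂μ :=
    strictMono_integral (fun ω _ _ hz => hmono t ht (add_lt_add_right hz (Y t ω))) (hint t ht)
  have hlower (t : ℝ) (ht : 0 ≤ t) : l t < ∫ ω, h t (X t ω) ∂μ ↔ (-a) t < k t := by
    simpa only [← ha t ht, hX t ht, sub_eq_add_neg, Pi.neg_apply] using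
      (hmean t ht).lt_iff_lt (a := -a t) (b := k t)
  have hupper (t : ℝ) (ht : 0 ≤ t) : (∫ ω, h t (X t ω) ∂μ) < u t ↔ k t < (-b) t := by
    simpa only [← hb t ht, hX t ht, sub_eq_add_neg, Pi.neg_apply] using
      (hmean t ht).lt_iff_lt (a := k t) (b := -b t)
  have hk_mem (t : ℝ) (ht : 0 ≤ t) : k t ∈ Icc ((-a) t) ((-b) t) := by
    obtain ⟨hl, hu⟩ := hmem t ht
    rw [← ha t ht] at hl
    rw [← hb t ht] at hu
    simp only [hX t ht, sub_eq_add_neg] at hl hu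
    exact ⟨(hmean t ht).le_iff_le.mp hl, (hmean t ht).le_iff_le.mp hu⟩
  exact ⟨hk, hk, hk0, fun t ht => ⟨(zero_add _).symm, hk_mem t ht⟩,
    fun t q ht htq =>
      ⟨fun hlt => (hmin t q ht htq).1 fun s hts hsq =>
        (hupper s (ht.trans hts.le)).mpr (hlt s hts hsq),
      fun hlt => (hmin t q ht htq).2 fun s hts hsq =>
        (hlower s (ht.trans hts.le)).mpr (hlt s hts hsq)⟩,
    fun t ht =>
      ⟨fun hlt => (hjump t ht).1 ((hupper t ht.le).mpr hlt),
      fun hlt => (hjump t ht).2 ((hlower t ht.le).mpr hlt)⟩⟩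

theorem stmt_6_general [NeZero μ] {Y X : ℝ → Ω → ℝ} {l u a b k : ℝ → ℝ}
    (hmono : ∀ t, 0 ≤ t → StrictMono (h t))
    (hint : ∀ t, 0 ≤ t → ∀ z, Integrable (fun ω => h t (Y t ω + z)) μ)
    (ha : ∀ t, 0 ≤ t → (∫ ω, h t (Y t ω - a t) ∂μ) = l t)
    (hb : ∀ t, 0 ≤ t → (∫ ω, h t (Y t ω - b t) ∂μ) = u t)
    (hsol : MeanSP μ h Y l u X k) {t : ℝ} (ht : 0 ≤ t) :
    k t = -max (min 0 (sInf (a '' Icc 0 t)))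
      (sSup ((fun s => min (b s) (sInf (a '' Icc s t))) '' Icc 0 t)) := by
  simpa only [reflection, zero_sub, neg_neg] using
    (hsol.detSP hmono hint ha hb).eq_neg_reflection ht

end Mean

/-- explicit formula for the compensating reflection function `k`. -/
theorem stmt_6 {Ω : Type*} [MeasurableSpace Ω] (μ : Measure Ω) [IsProbabilityMeasure μ]
    (h : ℝ → ℝ → ℝ) (Mh Lh ch Ch : ℝ) (hH : CondH h Mh Lh ch Ch)
    (Y : ℝ → Ω → ℝ) (hY : NiceProcess μ Y)
    (l u : ℝ → ℝ) (hl : CadlagOn l) (hu : CadlagOn u)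
    (hlu : ∀ t : ℝ, 0 ≤ t → l t ≤ u t)
    (h0 : (∫ ω, h 0 (Y 0 ω) ∂μ) ∈ Set.Icc (l 0) (u 0))
    (lbar ubar : ℝ → ℝ)
    (hlbar : ∀ t : ℝ, 0 ≤ t → (∫ ω, h t (Y t ω - (∫ ω', Y t ω' ∂μ) + lbar t) ∂μ) = l t)
    (hubar : ∀ t : ℝ, 0 ≤ t → (∫ ω, h t (Y t ω - (∫ ω', Y t ω' ∂μ) + ubar t) ∂μ) = u t)
    (X : ℝ → Ω → ℝ) (k : ℝ → ℝ) (hsol : MeanSP μ h Y l u X k) :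
    ∀ t : ℝ, 0 ≤ t →
      k t = -max
        (min 0 (sInf ((fun r => (∫ ω, Y r ω ∂μ) - lbar r) '' Set.Icc 0 t)))
        (sSup ((fun s => min ((∫ ω, Y s ω ∂μ) - ubar s)
            (sInf ((fun r => (∫ ω, Y r ω ∂μ) - lbar r) '' Set.Icc s t))) '' Set.Icc 0 t)) := by
  intro t ht
  exact stmt_6_general hH.strict_mono
    (fun t ht z => hH.integrable_comp ht ((hY.integrable t ht).add (integrable_const z)))
    (by simpa only [sub_add] using hlbar) (by simpa only [sub_add] using hubar) hsol ht
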